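/- 6·Li₃(2/3) + 3·Li₃(3/4) − Li₃(8/9) = (91/12)·ζ(3) − (π²/2)·log 2 + (7/3)·(log 2)³ − (1/3)·(log 3)³ − (1/3)·(log(3/2))³ − 2·log(4/3)·(log 2)² + log 3·(log(3/2))² + (2/3)·(log(4/3))³. -/

import Mathlib

/-!
All the arguments involved are rationals whose numerator, denominator and complement to `1` have
only the prime factors `2` and `3`, and the identity is a linear combination of values of three
functional equations of the trilogarithm (`L = log`):

* duplication, `Li₃(x²) = 4 (Li₃(x) + Li₃(-x))`, at `x = 1/2` and `x = 1` (`polyLog_sq`);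
* Landen's three-term equation (`Li3_landen`) for `Li₃(x) + Li₃(1 - x) + Li₃(1 - 1/x)`,
  at `x = 1/2, 2/3, 3/4`;
* a one-variable specialisation of the Spence–Kummer equation (`Li3_kummer`): with
  `u = (1 - x)/(1 + x)`,
  `Li₃(u) - Li₃(-u) - 2 Li₃(1 - x) - 2 Li₃(1/(1 + x)) + Li₃(1 - x²)/2`
  `  = -7 ζ(3)/4 - L(1 + x)³/3 + π² L(1 + x)/6`, at `x = 1/2` and `x = 1/3`.

Duplication is read off the series. The other two are proved by differentiation: `x Li₃'(x) = Li₂(x)`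
reduces the vanishing of the derivative to two dilogarithm identities each, and these are again
proved by differentiation, from `x Li₂'(x) = -log (1 - x)`. The constants of integration are found at
an endpoint of the interval, where the polylogarithms are still continuous and all arguments are
`0` or `±1`.
-/

open Real

/-- The Riemann zeta function, as a real-valued function of a real argument. -/
noncomputable def zetaR (s : ℝ) : ℝ := (riemannZeta s).re

/-- The trilogarithm `Li₃(x) = ∑_{n=1}^∞ xⁿ/n³` for real `x`. -/
noncomputable def Li3 (x : ℝ) : ℝ := ∑' n : ℕ, x ^ (n + 1) / (n + 1) ^ 3

/-! ### Polylogarithms of natural order -/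

/-- The polylogarithm `∑_{n ≥ 1} xⁿ / nᵏ`, with the summation index shifted to start at `0`. -/
noncomputable def polyLog (k : ℕ) (x : ℝ) : ℝ := ∑' n : ℕ, x ^ (n + 1) / ((n : ℝ) + 1) ^ k

lemma polyLog_three (x : ℝ) : polyLog 3 x = Li3 x := rfl

lemma polyLog_zero (k : ℕ) : polyLog k 0 = 0 := by
  simp [polyLog]

lemma polyLog_one_eq_log {x : ℝ} (hx : |x| < 1) : polyLog 1 x = -Real.log (1 - x) := by
  simpa [polyLog] using (Real.hasSum_pow_div_log_of_abs_lt_one hx).tsum_eq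

lemma summable_one_div_succ_pow {k : ℕ} (hk : 2 ≤ k) :
    Summable fun n : ℕ => 1 / ((n : ℝ) + 1) ^ k := by
  have h := (summable_nat_add_iff 1).2 (Real.summable_one_div_nat_pow.2 (by omega : 1 < k))
  simpa using h

lemma norm_polyLog_term_le {k : ℕ} {x : ℝ} (hx : |x| ≤ 1) (n : ℕ) :
    ‖x ^ (n + 1) / ((n : ℝ) + 1) ^ k‖ ≤ 1 / ((n : ℝ) + 1) ^ k := by
  have h0 : (0 : ℝ) < ((n : ℝ) + 1) ^ k := by positivity
  rw [norm_div, norm_pow, Real.norm_eq_abs, Real.norm_of_nonneg h0.le]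
  gcongr
  exact pow_le_one₀ (abs_nonneg x) hx

lemma summable_polyLog {k : ℕ} (hk : 2 ≤ k) {x : ℝ} (hx : |x| ≤ 1) :
    Summable fun n : ℕ => x ^ (n + 1) / ((n : ℝ) + 1) ^ k :=
  Summable.of_norm_bounded (summable_one_div_succ_pow hk) (norm_polyLog_term_le hx)

lemma continuousOn_polyLog {k : ℕ} (hk : 2 ≤ k) :
    ContinuousOn (polyLog k) (Set.Icc (-1) 1) := by
  refine continuousOn_tsum (fun n => ?_) (summable_one_div_succ_pow hk)
    (fun n x hx => norm_polyLog_term_le (abs_le.2 hx) n)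
  fun_prop

lemma ContinuousOn.polyLog {k : ℕ} (hk : 2 ≤ k) {g : ℝ → ℝ} {s : Set ℝ} (hg : ContinuousOn g s)
    (h : ∀ x ∈ s, -1 ≤ g x ∧ g x ≤ 1) : ContinuousOn (fun x => polyLog k (g x)) s :=
  (continuousOn_polyLog hk).comp hg h

lemma hasDerivAt_polyLog (k : ℕ) {x : ℝ} (hx : |x| < 1) (hx0 : x ≠ 0) :
    HasDerivAt (polyLog (k + 1)) (polyLog k x / x) x := by
  obtain ⟨r, hxr, hr1⟩ := exists_between hx
  have hr0 : 0 < r := (abs_nonneg x).trans_lt hxr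
  have key : HasDerivAt (polyLog (k + 1)) (∑' n : ℕ, x ^ n / ((n : ℝ) + 1) ^ k) x := by
    refine hasDerivAt_tsum_of_isPreconnected (t := Set.Ioo (-r) r) (y₀ := 0)
      (g := fun (n : ℕ) (y : ℝ) => y ^ (n + 1) / ((n : ℝ) + 1) ^ (k + 1))
      (g' := fun (n : ℕ) (y : ℝ) => y ^ n / ((n : ℝ) + 1) ^ k)
      (summable_geometric_of_lt_one hr0.le hr1) isOpen_Ioo isPreconnected_Ioo ?_ ?_
      ⟨by linarith, hr0⟩ ?_ (abs_lt.1 hxr)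
    · intro n y _
      have h := (hasDerivAt_pow (n + 1) y).div_const (((n : ℝ) + 1) ^ (k + 1))
      refine h.congr_deriv ?_
      have : (n : ℝ) + 1 ≠ 0 := by positivity
      push_cast
      field_simp
      ring
    · intro n y hy
      have h1 : (1 : ℝ) ≤ ((n : ℝ) + 1) ^ k := one_le_pow₀ (by linarith [n.cast_nonneg (α := ℝ)])
      rw [norm_div, norm_pow, Real.norm_eq_abs, Real.norm_of_nonneg (zero_le_one.trans h1)]
      refine (div_le_self (by positivity) h1).trans ?_
      gcongr
      exact (abs_lt.2 hy).le
    · simp [summable_zero]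
  convert key using 1
  rw [polyLog, ← tsum_div_const]
  refine tsum_congr fun n => ?_
  rw [pow_succ]
  field_simp

lemma HasDerivAt.polyLog_three {g : ℝ → ℝ} {g' x : ℝ} (hg : HasDerivAt g g' x)
    (h1 : -1 < g x) (h2 : g x < 1) (h0 : g x ≠ 0) :
    HasDerivAt (fun y => polyLog 3 (g y)) (polyLog 2 (g x) / g x * g') x :=
  (hasDerivAt_polyLog 2 (abs_lt.2 ⟨h1, h2⟩) h0).comp x hg

lemma HasDerivAt.polyLog_two {g : ℝ → ℝ} {g' x : ℝ} (hg : HasDerivAt g g' x)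
    (h1 : -1 < g x) (h2 : g x < 1) (h0 : g x ≠ 0) :
    HasDerivAt (fun y => polyLog 2 (g y)) (-Real.log (1 - g x) / g x * g') x := by
  have h := (hasDerivAt_polyLog 1 (abs_lt.2 ⟨h1, h2⟩) h0).comp x hg
  rwa [polyLog_one_eq_log (abs_lt.2 ⟨h1, h2⟩)] at h

/-- Duplication formula: the odd powers cancel in `Li_k(x) + Li_k(-x)`. -/
lemma polyLog_sq {k : ℕ} (hk : 2 ≤ k) {x : ℝ} (hx : |x| ≤ 1) :
    2 * polyLog k (x ^ 2) = 2 ^ k * (polyLog k x + polyLog k (-x)) := by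
  have hs := summable_polyLog hk hx
  have hs' := summable_polyLog hk (x := -x) (by rwa [abs_neg])
  have hsq := summable_polyLog hk (x := x ^ 2) (by rw [abs_pow]; exact pow_le_one₀ (abs_nonneg x) hx)
  unfold polyLog
  rw [← hs.tsum_add hs']
  have he : ∀ n : ℕ, x ^ (2 * n + 1) / (((2 * n : ℕ) : ℝ) + 1) ^ k
      + (-x) ^ (2 * n + 1) / (((2 * n : ℕ) : ℝ) + 1) ^ k = 0 := by
    intro n
    rw [Odd.neg_pow ⟨n, rfl⟩]
    ring
  have ho : ∀ n : ℕ, x ^ (2 * n + 1 + 1) / (((2 * n + 1 : ℕ) : ℝ) + 1) ^ k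
      + (-x) ^ (2 * n + 1 + 1) / (((2 * n + 1 : ℕ) : ℝ) + 1) ^ k
      = 2 / 2 ^ k * ((x ^ 2) ^ (n + 1) / ((n : ℝ) + 1) ^ k) := by
    intro n
    rw [Even.neg_pow ⟨n + 1, by ring⟩, ← pow_mul]
    have h2 : (((2 * n + 1 : ℕ) : ℝ) + 1) = 2 * ((n : ℝ) + 1) := by push_cast; ring
    rw [h2, mul_pow, show 2 * n + 1 + 1 = 2 * (n + 1) by ring]
    field_simp
    ring
  rw [← tsum_even_add_odd (f := fun n : ℕ => x ^ (n + 1) / ((n : ℝ) + 1) ^ k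
    + (-x) ^ (n + 1) / ((n : ℝ) + 1) ^ k)]
  · simp only [he, ho, tsum_zero, zero_add, tsum_mul_left]
    field_simp
  · simp only [he]
    exact summable_zero
  · simp only [ho]
    exact hsq.mul_left _

lemma polyLog_two_one : polyLog 2 1 = π ^ 2 / 6 := by
  have h := hasSum_zeta_two.summable.tsum_eq_zero_add
  rw [hasSum_zeta_two.tsum_eq] at h
  simp only [polyLog, one_pow]
  simpa using h.symm

lemma polyLog_two_neg_one : polyLog 2 (-1) = -π ^ 2 / 12 := by
  have h := polyLog_sq (k := 2) le_rfl (x := 1) (by simp)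
  rw [one_pow, polyLog_two_one] at h
  linarith

lemma polyLog_three_one : polyLog 3 1 = zetaR 3 := by
  have h : riemannZeta ((3 : ℝ) : ℂ) = ((polyLog 3 1 : ℝ) : ℂ) := by
    rw [zeta_eq_tsum_one_div_nat_add_one_cpow (by norm_num), polyLog, Complex.ofReal_tsum]
    refine tsum_congr fun n => ?_
    push_cast
    rw [one_pow, ← Complex.cpow_natCast]
    norm_num
  rw [zetaR, h, Complex.ofReal_re]

lemma polyLog_three_neg_one : polyLog 3 (-1) = -3 / 4 * zetaR 3 := by
  have h := polyLog_sq (k := 3) (by norm_num) (x := 1) (by simp)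
  rw [one_pow, polyLog_three_one] at h
  linarith

/-! ### Functional equations -/

lemma eq_endpoints_of_hasDerivAt_zero {f : ℝ → ℝ} {a b : ℝ} (hab : a ≤ b)
    (hc : ContinuousOn f (Set.Icc a b)) (hd : ∀ x ∈ Set.Ioo a b, HasDerivAt f 0 x) :
    f a = f b := by
  rcases hab.eq_or_lt with rfl | hab
  · rfl
  obtain ⟨c, -, h⟩ := exists_hasDerivAt_eq_slope f (fun _ => 0) hab hc hd
  have h1 : b - a ≠ 0 := by linarith
  field_simp at h
  linarith

/-- At `x = 1` the zero of `log x` beats the singularity of `log (1 - x)`, and the convention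
`log 0 = 0` gives the limiting value. -/
lemma continuousOn_log_mul_log :
    ContinuousOn (fun x : ℝ => Real.log x * Real.log (1 - x)) (Set.Ioi 0) := by
  have h1 : ContinuousOn (dslope Real.log 1) (Set.Ioi 0) := by
    intro x hx
    refine ContinuousAt.continuousWithinAt ?_
    by_cases h : x = 1
    · subst h
      exact continuousAt_dslope_same.2 (Real.differentiableAt_log one_ne_zero)
    · exact (continuousAt_dslope_of_ne h).2 (Real.continuousAt_log (ne_of_gt hx))
  have h2 : Continuous fun x : ℝ => (1 - x) * Real.log (1 - x) :=
    Real.continuous_mul_log.comp (continuous_const.sub continuous_id)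
  refine (h1.mul h2.continuousOn).neg.congr fun x _ => ?_
  have h3 := sub_smul_dslope Real.log 1 x
  rw [Real.log_one, sub_zero, smul_eq_mul] at h3
  rw [← h3]
  simp only [Pi.neg_apply, Pi.mul_apply]
  ring

/-- Euler's reflection formula. -/
lemma Li2_reflection {x : ℝ} (h0 : 0 < x) (h1 : x ≤ 1) :
    polyLog 2 x + polyLog 2 (1 - x) + Real.log x * Real.log (1 - x) = π ^ 2 / 6 := by
  have key := eq_endpoints_of_hasDerivAt_zero
    (f := fun x => polyLog 2 x + polyLog 2 (1 - x) + Real.log x * Real.log (1 - x)) h1 ?_ ?_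
  · simpa [polyLog_zero, polyLog_two_one] using key
  · refine ((ContinuousOn.polyLog le_rfl (by fun_prop) ?_).add
      (ContinuousOn.polyLog le_rfl (by fun_prop) ?_)).add
      (continuousOn_log_mul_log.mono fun y hy => h0.trans_le hy.1)
    · intro y hy; constructor <;> linarith [hy.1, hy.2]
    · intro y hy; constructor <;> linarith [hy.1, hy.2]
  · intro y hy
    have hy0 : 0 < y := h0.trans hy.1
    have hy1 : 0 < 1 - y := by linarith [hy.2]
    have hs : HasDerivAt (fun y : ℝ => 1 - y) (-1) y := by
      simpa using (hasDerivAt_id y).const_sub 1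
    have h := (((hasDerivAt_id y).polyLog_two (by simp only [id]; linarith)
      (by simp only [id]; linarith) hy0.ne').add
      (hs.polyLog_two (by linarith) (by linarith) hy1.ne')).add
      ((Real.hasDerivAt_log hy0.ne').mul (hs.log hy1.ne'))
    refine h.congr_deriv ?_
    simp only [id, sub_sub_cancel]
    field_simp
    ring

/-- Landen's transformation of the dilogarithm. -/
lemma Li2_landen {x : ℝ} (h0 : 1 / 2 ≤ x) (h1 : x ≤ 1) :
    polyLog 2 (1 - x) + polyLog 2 (1 - x⁻¹) = -1 / 2 * Real.log x ^ 2 := by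
  have key := eq_endpoints_of_hasDerivAt_zero
    (f := fun x => polyLog 2 (1 - x) + polyLog 2 (1 - x⁻¹) + 1 / 2 * Real.log x ^ 2) h1 ?_ ?_
  · simp [polyLog_zero] at key
    linarith
  · have hne : ∀ y ∈ Set.Icc x 1, y ≠ 0 := fun y hy => by linarith [hy.1]
    refine ((ContinuousOn.polyLog le_rfl (by fun_prop) ?_).add
      (ContinuousOn.polyLog le_rfl (by fun_prop (disch := assumption)) ?_)).add
      (by fun_prop (disch := assumption))
    · intro y hy; constructor <;> linarith [hy.1, hy.2]
    · intro y hy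
      have hy0 : 0 < y := by linarith [hy.1]
      have : y⁻¹ ≤ 2 := by rw [inv_le_comm₀ hy0 two_pos]; linarith [hy.1]
      have : 0 < y⁻¹ := by positivity
      constructor <;> linarith
  · intro y hy
    have hy0 : 0 < y := by linarith [hy.1]
    have hy1 : 0 < 1 - y := by linarith [hy.2]
    have hi2 : y⁻¹ < 2 := by rw [inv_lt_comm₀ hy0 two_pos]; linarith [hy.1]
    have hi1 : 1 < y⁻¹ := (one_lt_inv₀ hy0).2 hy.2
    have hs : HasDerivAt (fun y : ℝ => 1 - y) (-1) y := by
      simpa using (hasDerivAt_id y).const_sub 1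
    have hi : HasDerivAt (fun y : ℝ => 1 - y⁻¹) (1 / y ^ 2) y := by
      simpa using (hasDerivAt_inv hy0.ne').const_sub 1
    have h := ((hs.polyLog_two (by linarith) (by linarith) hy1.ne').add
      (hi.polyLog_two (by linarith) (by linarith) (by linarith))).add
      (((Real.hasDerivAt_log hy0.ne').pow 2).const_mul (1 / 2))
    refine h.congr_deriv ?_
    have hne : y - 1 ≠ 0 := by linarith
    rw [sub_sub_cancel, sub_sub_cancel, Real.log_inv, show 1 - y⁻¹ = (y - 1) / y by field_simp]
    field_simp
    push_cast
    ring

/-- Landen's three-term equation. -/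
lemma Li3_landen {x : ℝ} (h0 : 1 / 2 ≤ x) (h1 : x ≤ 1) :
    polyLog 3 x + polyLog 3 (1 - x) + polyLog 3 (1 - x⁻¹) =
      zetaR 3 + Real.log x ^ 3 / 6 + π ^ 2 / 6 * Real.log x
        - 1 / 2 * Real.log x ^ 2 * Real.log (1 - x) := by
  have key := eq_endpoints_of_hasDerivAt_zero
    (f := fun x => polyLog 3 x + polyLog 3 (1 - x) + polyLog 3 (1 - x⁻¹)
      + (-1 / 6 * Real.log x ^ 3 - π ^ 2 / 6 * Real.log x
      + 1 / 2 * (Real.log x * (Real.log x * Real.log (1 - x))))) h1 ?_ ?_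
  · simp [polyLog_zero, polyLog_three_one] at key
    linarith
  · have hne : ∀ y ∈ Set.Icc x 1, y ≠ 0 := fun y hy => by linarith [hy.1]
    have hll : ContinuousOn (fun y : ℝ => Real.log y * Real.log (1 - y)) (Set.Icc x 1) :=
      continuousOn_log_mul_log.mono fun y hy => show 0 < y by linarith [hy.1]
    have hl : ContinuousOn (fun y : ℝ => Real.log y) (Set.Icc x 1) := by
      fun_prop (disch := assumption)
    refine (((ContinuousOn.polyLog (by norm_num) (by fun_prop) ?_).add
      (ContinuousOn.polyLog (by norm_num) (by fun_prop) ?_)).add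
      (ContinuousOn.polyLog (by norm_num) (by fun_prop (disch := assumption)) ?_)).add
      (((((hl.pow 3).const_mul _).sub (hl.const_mul _))).add ((hl.mul hll).const_mul _))
    · intro y hy; constructor <;> linarith [hy.1, hy.2]
    · intro y hy; constructor <;> linarith [hy.1, hy.2]
    · intro y hy
      have hy0 : 0 < y := by linarith [hy.1]
      have : y⁻¹ ≤ 2 := by rw [inv_le_comm₀ hy0 two_pos]; linarith [hy.1]
      have : 0 < y⁻¹ := by positivity
      constructor <;> linarith
  · intro y hy
    have hy0 : 0 < y := by linarith [hy.1]
    have hy1 : 0 < 1 - y := by linarith [hy.2]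
    have hi2 : y⁻¹ < 2 := by rw [inv_lt_comm₀ hy0 two_pos]; linarith [hy.1]
    have hi1 : 1 < y⁻¹ := (one_lt_inv₀ hy0).2 hy.2
    have hs : HasDerivAt (fun y : ℝ => 1 - y) (-1) y := by
      simpa using (hasDerivAt_id y).const_sub 1
    have hi : HasDerivAt (fun y : ℝ => 1 - y⁻¹) (1 / y ^ 2) y := by
      simpa using (hasDerivAt_inv hy0.ne').const_sub 1
    have hl := Real.hasDerivAt_log hy0.ne'
    have h := ((((hasDerivAt_id y).polyLog_three (by simp only [id]; linarith)
      (by simp only [id]; linarith) hy0.ne').add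
      (hs.polyLog_three (by linarith) (by linarith) hy1.ne')).add
      (hi.polyLog_three (by linarith) (by linarith) (by linarith))).add
      ((((hl.pow 3).const_mul (-1 / 6)).sub (hl.const_mul (π ^ 2 / 6))).add
      ((hl.mul (hl.mul (hs.log hy1.ne'))).const_mul (1 / 2)))
    refine h.congr_deriv ?_
    have hA := Li2_landen (h0.trans hy.1.le) hy.2.le
    have hR := Li2_reflection hy0 hy.2.le
    have hne : y - 1 ≠ 0 := by linarith
    have e1 : polyLog 2 (1 - y⁻¹) = -1 / 2 * Real.log y ^ 2 - polyLog 2 (1 - y) := by linarith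
    have e2 : polyLog 2 y = π ^ 2 / 6 - Real.log y * Real.log (1 - y) - polyLog 2 (1 - y) := by
      linarith
    simp only [id, Pi.mul_apply]
    rw [e1, e2, show 1 - y⁻¹ = -(1 - y) / y by field_simp; ring]
    field_simp
    push_cast
    ring

/-- The arguments of the dilogarithms and trilogarithms in the Kummer-type equations stay in the
open unit interval, where the derivative formulas apply. -/
lemma kummer_arguments {y : ℝ} (hy : y ∈ Set.Ioo (0 : ℝ) 1) :
    (0 < (1 - y) / (1 + y) ∧ (1 - y) / (1 + y) < 1) ∧ (0 < (1 + y)⁻¹ ∧ (1 + y)⁻¹ < 1) ∧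
      (0 < 1 - y ^ 2 ∧ 1 - y ^ 2 < 1) := by
  obtain ⟨h0, h1⟩ := hy
  have h2 : 0 < 1 + y := by linarith
  have h3 : 0 < 1 - y := by linarith
  refine ⟨⟨by positivity, ?_⟩, ⟨by positivity, ?_⟩, by nlinarith, by nlinarith⟩
  · rw [div_lt_one h2]; linarith
  · exact inv_lt_one_of_one_lt₀ (by linarith)

lemma kummer_arguments_closed {y : ℝ} (hy : y ∈ Set.Icc (0 : ℝ) 1) :
    (0 ≤ (1 - y) / (1 + y) ∧ (1 - y) / (1 + y) ≤ 1) ∧ (0 ≤ (1 + y)⁻¹ ∧ (1 + y)⁻¹ ≤ 1) ∧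
      (0 ≤ 1 - y ^ 2 ∧ 1 - y ^ 2 ≤ 1) := by
  obtain ⟨h0, h1⟩ := hy
  have h2 : 0 < 1 + y := by linarith
  have h3 : 0 ≤ 1 - y := by linarith
  refine ⟨⟨by positivity, ?_⟩, ⟨by positivity, ?_⟩, by nlinarith, by nlinarith⟩
  · rw [div_le_one h2]; linarith
  · exact inv_le_one_of_one_le₀ (by linarith)

lemma hasDerivAt_mobius {y : ℝ} (hy : 0 < 1 + y) :
    HasDerivAt (fun y : ℝ => (1 - y) / (1 + y)) (-2 / (1 + y) ^ 2) y := by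
  refine (((hasDerivAt_id y).const_sub 1).div ((hasDerivAt_id y).const_add 1) hy.ne').congr_deriv ?_
  simp only [id]
  ring

lemma hasDerivAt_inv_one_add {y : ℝ} (hy : 0 < 1 + y) :
    HasDerivAt (fun y : ℝ => (1 + y)⁻¹) (-1 / (1 + y) ^ 2) y := by
  exact ((hasDerivAt_id y).const_add 1).inv hy.ne'

lemma hasDerivAt_one_sub_sq (y : ℝ) : HasDerivAt (fun y : ℝ => 1 - y ^ 2) (-(2 * y)) y := by
  simpa using (hasDerivAt_pow 2 y).const_sub 1

lemma continuousOn_polyLog_kummer {k : ℕ} (hk : 2 ≤ k) :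
    ContinuousOn (fun y => polyLog k ((1 - y) / (1 + y))) (Set.Icc 0 1) ∧
    ContinuousOn (fun y => polyLog k (-((1 - y) / (1 + y)))) (Set.Icc 0 1) ∧
    ContinuousOn (fun y => polyLog k (1 - y)) (Set.Icc 0 1) ∧
    ContinuousOn (fun y => polyLog k (1 + y)⁻¹) (Set.Icc 0 1) ∧
    ContinuousOn (fun y => polyLog k (1 - y ^ 2)) (Set.Icc 0 1) := by
  have hne : ∀ y ∈ Set.Icc (0 : ℝ) 1, 1 + y ≠ 0 := fun y hy => by linarith [hy.1]
  refine ⟨ContinuousOn.polyLog hk (by fun_prop (disch := assumption)) ?_,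
    ContinuousOn.polyLog hk (by fun_prop (disch := assumption)) ?_,
    ContinuousOn.polyLog hk (by fun_prop) ?_,
    ContinuousOn.polyLog hk (by fun_prop (disch := assumption)) ?_,
    ContinuousOn.polyLog hk (by fun_prop) ?_⟩ <;>
  · intro y hy
    obtain ⟨⟨a1, a2⟩, ⟨b1, b2⟩, c1, c2⟩ := kummer_arguments_closed hy
    obtain ⟨h0, h1⟩ := hy
    constructor <;> linarith

/-- The derivative of `Li₂(u) - Li₂(-u)` for `u = (1 - y)/(1 + y)`. -/
lemma hasDerivAt_Li2_mobius {y : ℝ} (hy : y ∈ Set.Ioo (0 : ℝ) 1) :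
    HasDerivAt (fun y => polyLog 2 ((1 - y) / (1 + y)) - polyLog 2 (-((1 - y) / (1 + y))))
      (2 * Real.log y / ((1 - y) * (1 + y))) y := by
  obtain ⟨⟨a1, a2⟩, -, -⟩ := kummer_arguments hy
  obtain ⟨h0, h1⟩ := hy
  have hp : 0 < 1 + y := by linarith
  have hm : 0 < 1 - y := by linarith
  have hu := hasDerivAt_mobius hp
  have h := (hu.polyLog_two (by linarith) a2 a1.ne').sub
    (hu.fun_neg.polyLog_two (by linarith) (by linarith) (neg_ne_zero.2 a1.ne'))
  refine h.congr_deriv ?_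
  have e1 : Real.log (1 - (1 - y) / (1 + y)) = Real.log 2 + Real.log y - Real.log (1 + y) := by
    rw [show 1 - (1 - y) / (1 + y) = 2 * y / (1 + y) by field_simp; ring,
      Real.log_div (by positivity) hp.ne', Real.log_mul two_ne_zero h0.ne']
  have e2 : Real.log (1 - -((1 - y) / (1 + y))) = Real.log 2 - Real.log (1 + y) := by
    rw [show 1 - -((1 - y) / (1 + y)) = 2 / (1 + y) by field_simp; ring,
      Real.log_div two_ne_zero hp.ne']
  rw [e1, e2]
  field_simp
  ring

lemma hasDerivAt_Li2_one_sub_sq {y : ℝ} (hy : y ∈ Set.Ioo (0 : ℝ) 1) :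
    HasDerivAt (fun y => polyLog 2 (1 - y ^ 2)) (4 * y * Real.log y / ((1 - y) * (1 + y))) y := by
  obtain ⟨-, -, c1, c2⟩ := kummer_arguments hy
  have hp : 0 < 1 + y := by linarith [hy.1]
  have hm : 0 < 1 - y := by linarith [hy.2]
  refine ((hasDerivAt_one_sub_sq y).polyLog_two (by linarith) c2 c1.ne').congr_deriv ?_
  rw [sub_sub_cancel, Real.log_pow, show 1 - y ^ 2 = (1 - y) * (1 + y) by ring]
  push_cast
  field_simp
  ring

/-- The coefficient of `1/(1 - x)` in the derivative of the left side of `Li3_kummer` vanishes. -/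
lemma Li2_kummer_one_sub {x : ℝ} (h0 : 0 ≤ x) (h1 : x ≤ 1) :
    polyLog 2 ((1 - x) / (1 + x)) - polyLog 2 (-((1 - x) / (1 + x))) =
      2 * polyLog 2 (1 - x) - 1 / 2 * polyLog 2 (1 - x ^ 2) := by
  obtain ⟨c1, c2, c3, -, c5⟩ := continuousOn_polyLog_kummer (k := 2) le_rfl
  have key := eq_endpoints_of_hasDerivAt_zero
    (f := fun x => (polyLog 2 ((1 - x) / (1 + x)) - polyLog 2 (-((1 - x) / (1 + x))))
      - 2 * polyLog 2 (1 - x) + 1 / 2 * polyLog 2 (1 - x ^ 2)) h1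
    ((((c1.sub c2).sub (c3.const_mul 2)).add (c5.const_mul (1 / 2))).mono
      (Set.Icc_subset_Icc_left h0)) ?_
  · simp [polyLog_zero] at key
    linarith
  · intro y hy
    have hy' : y ∈ Set.Ioo (0 : ℝ) 1 := ⟨h0.trans_lt hy.1, hy.2⟩
    have hp : 0 < 1 + y := by linarith [hy'.1]
    have hm : 0 < 1 - y := by linarith [hy'.2]
    have hs : HasDerivAt (fun y : ℝ => 1 - y) (-1) y := by
      simpa using (hasDerivAt_id y).const_sub 1
    have h := ((hasDerivAt_Li2_mobius hy').sub ((hs.polyLog_two (by linarith)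
      (by linarith [hy'.1]) hm.ne').const_mul 2)).add
      ((hasDerivAt_Li2_one_sub_sq hy').const_mul (1 / 2))
    refine h.congr_deriv ?_
    rw [sub_sub_cancel]
    field_simp
    ring

/-- The coefficient of `1/(1 + x)` in the derivative of the left side of `Li3_kummer` is
elementary. -/
lemma Li2_kummer_one_add {x : ℝ} (h0 : 0 ≤ x) (h1 : x ≤ 1) :
    polyLog 2 ((1 - x) / (1 + x)) - polyLog 2 (-((1 - x) / (1 + x))) =
      2 * polyLog 2 (1 + x)⁻¹ + 1 / 2 * polyLog 2 (1 - x ^ 2)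
        + Real.log (1 + x) ^ 2 - π ^ 2 / 6 := by
  obtain ⟨c1, c2, -, c4, c5⟩ := continuousOn_polyLog_kummer (k := 2) le_rfl
  have hne : ∀ y ∈ Set.Icc (0 : ℝ) 1, 1 + y ≠ 0 := fun y hy => by linarith [hy.1]
  have c6 : ContinuousOn (fun y : ℝ => Real.log (1 + y) ^ 2) (Set.Icc 0 1) := by
    fun_prop (disch := assumption)
  have key := eq_endpoints_of_hasDerivAt_zero
    (f := fun x => (polyLog 2 ((1 - x) / (1 + x)) - polyLog 2 (-((1 - x) / (1 + x))))
      - 2 * polyLog 2 (1 + x)⁻¹ - 1 / 2 * polyLog 2 (1 - x ^ 2) - Real.log (1 + x) ^ 2) h0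
    (((((c1.sub c2).sub (c4.const_mul 2)).sub (c5.const_mul (1 / 2))).sub c6).mono
      (Set.Icc_subset_Icc_right h1)) ?_
  · simp [polyLog_two_one, polyLog_two_neg_one] at key
    linarith
  · intro y hy
    have hy' : y ∈ Set.Ioo (0 : ℝ) 1 := ⟨hy.1, hy.2.trans_le h1⟩
    obtain ⟨-, ⟨b1, b2⟩, -⟩ := kummer_arguments hy'
    have hy0 := hy'.1
    have hp : 0 < 1 + y := by linarith [hy'.1]
    have hm : 0 < 1 - y := by linarith [hy'.2]
    have hl : HasDerivAt (fun y : ℝ => Real.log (1 + y)) (1 / (1 + y)) y :=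
      ((hasDerivAt_id y).const_add 1).log hp.ne'
    have h := (((hasDerivAt_Li2_mobius hy').sub (((hasDerivAt_inv_one_add hp).polyLog_two
      (by linarith) b2 b1.ne').const_mul 2)).sub
      ((hasDerivAt_Li2_one_sub_sq hy').const_mul (1 / 2))).sub (hl.pow 2)
    refine h.congr_deriv ?_
    have e : Real.log (1 - (1 + y)⁻¹) = Real.log y - Real.log (1 + y) := by
      rw [show 1 - (1 + y)⁻¹ = y / (1 + y) by field_simp; ring, Real.log_div hy0.ne' hp.ne']
    rw [e]
    field_simp
    push_cast
    ring

/-- A one-variable specialisation of the Spence–Kummer equation. -/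
lemma Li3_kummer {x : ℝ} (h0 : 0 ≤ x) (h1 : x ≤ 1) :
    polyLog 3 ((1 - x) / (1 + x)) - polyLog 3 (-((1 - x) / (1 + x))) - 2 * polyLog 3 (1 - x)
      - 2 * polyLog 3 (1 + x)⁻¹ + 1 / 2 * polyLog 3 (1 - x ^ 2) =
      -7 / 4 * zetaR 3 - Real.log (1 + x) ^ 3 / 3 + π ^ 2 / 6 * Real.log (1 + x) := by
  obtain ⟨c1, c2, c3, c4, c5⟩ := continuousOn_polyLog_kummer (k := 3) (by norm_num)
  have hne : ∀ y ∈ Set.Icc (0 : ℝ) 1, 1 + y ≠ 0 := fun y hy => by linarith [hy.1]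
  have c6 : ContinuousOn (fun y : ℝ => Real.log (1 + y)) (Set.Icc 0 1) := by
    fun_prop (disch := assumption)
  have key := eq_endpoints_of_hasDerivAt_zero
    (f := fun x => polyLog 3 ((1 - x) / (1 + x)) - polyLog 3 (-((1 - x) / (1 + x)))
      - 2 * polyLog 3 (1 - x) - 2 * polyLog 3 (1 + x)⁻¹ + 1 / 2 * polyLog 3 (1 - x ^ 2)
      + 1 / 3 * Real.log (1 + x) ^ 3 - π ^ 2 / 6 * Real.log (1 + x)) h0
    (((((((c1.sub c2).sub (c3.const_mul 2)).sub (c4.const_mul 2)).add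
      (c5.const_mul (1 / 2))).add ((c6.pow 3).const_mul _)).sub (c6.const_mul _)).mono
      (Set.Icc_subset_Icc_right h1)) ?_
  · simp [polyLog_three_one, polyLog_three_neg_one] at key
    linarith
  · intro y hy
    have hy' : y ∈ Set.Ioo (0 : ℝ) 1 := ⟨hy.1, hy.2.trans_le h1⟩
    obtain ⟨⟨a1, a2⟩, ⟨b1, b2⟩, d1, d2⟩ := kummer_arguments hy'
    have hy0 := hy'.1
    have hp : 0 < 1 + y := by linarith [hy'.1]
    have hm : 0 < 1 - y := by linarith [hy'.2]
    have hs : HasDerivAt (fun y : ℝ => 1 - y) (-1) y := by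
      simpa using (hasDerivAt_id y).const_sub 1
    have hl : HasDerivAt (fun y : ℝ => Real.log (1 + y)) (1 / (1 + y)) y :=
      ((hasDerivAt_id y).const_add 1).log hp.ne'
    have hu := hasDerivAt_mobius hp
    have h := (((((((hu.polyLog_three (by linarith) a2 a1.ne').sub
      (hu.fun_neg.polyLog_three (by linarith) (by linarith) (neg_ne_zero.2 a1.ne'))).sub
      ((hs.polyLog_three (by linarith) (by linarith) hm.ne').const_mul 2)).sub
      (((hasDerivAt_inv_one_add hp).polyLog_three (by linarith) b2 b1.ne').const_mul 2)).add
      (((hasDerivAt_one_sub_sq y).polyLog_three (by linarith) d2 d1.ne').const_mul (1 / 2))).add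
      ((hl.pow 3).const_mul (1 / 3))).sub (hl.const_mul (π ^ 2 / 6)))
    refine h.congr_deriv ?_
    have hA := Li2_kummer_one_sub hy'.1.le hy'.2.le
    have hB := Li2_kummer_one_add hy'.1.le hy'.2.le
    have e1 : polyLog 2 ((1 - y) / (1 + y)) = polyLog 2 (-((1 - y) / (1 + y)))
        + 2 * polyLog 2 (1 - y) - 1 / 2 * polyLog 2 (1 - y ^ 2) := by linarith
    have e2 : polyLog 2 (1 + y)⁻¹ = polyLog 2 (1 - y) - 1 / 2 * polyLog 2 (1 - y ^ 2)
        - 1 / 2 * Real.log (1 + y) ^ 2 + π ^ 2 / 12 := by linarith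
    rw [e1, e2]
    generalize polyLog 2 (1 - y ^ 2) = A
    rw [show 1 - y ^ 2 = (1 - y) * (1 + y) by ring]
    field_simp
    push_cast
    ring

/-- `6·Li₃(2/3) + 3·Li₃(3/4) − Li₃(8/9) = (91/12)·ζ(3) − (π²/2)·log 2 + (7/3)·(log 2)³
  − (1/3)·(log 3)³ − (1/3)·(log(3/2))³ − 2·log(4/3)·(log 2)² + log 3·(log(3/2))²
  + (2/3)·(log(4/3))³`. -/
theorem Li3_identity_three :
    6 * Li3 (2 / 3) + 3 * Li3 (3 / 4) - Li3 (8 / 9) =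
      91 / 12 * zetaR 3 - π ^ 2 / 2 * Real.log 2 + 7 / 3 * (Real.log 2) ^ 3 -
        1 / 3 * (Real.log 3) ^ 3 - 1 / 3 * (Real.log (3 / 2)) ^ 3 -
        2 * Real.log (4 / 3) * (Real.log 2) ^ 2 + Real.log 3 * (Real.log (3 / 2)) ^ 2 +
        2 / 3 * (Real.log (4 / 3)) ^ 3 := by
  simp only [← polyLog_three]
  have l4 : Real.log 4 = 2 * Real.log 2 := by
    rw [show (4 : ℝ) = 2 ^ 2 by norm_num, Real.log_pow]; norm_num
  have l32 : Real.log (3 / 2) = Real.log 3 - Real.log 2 := Real.log_div (by norm_num) (by norm_num)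
  have l43 : Real.log (4 / 3) = 2 * Real.log 2 - Real.log 3 := by
    rw [Real.log_div (by norm_num) (by norm_num), l4]
  have l23 : Real.log (2 / 3) = Real.log 2 - Real.log 3 := Real.log_div (by norm_num) (by norm_num)
  have l34 : Real.log (3 / 4) = Real.log 3 - 2 * Real.log 2 := by
    rw [Real.log_div (by norm_num) (by norm_num), l4]
  have l12 : Real.log (1 / 2) = -Real.log 2 := by rw [one_div, Real.log_inv]
  have l13 : Real.log (1 / 3) = -Real.log 3 := by rw [one_div, Real.log_inv]
  have l14 : Real.log (1 / 4) = -(2 * Real.log 2) := by rw [one_div, Real.log_inv, l4]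
  have K2 := Li3_kummer (x := 1 / 2) (by norm_num) (by norm_num)
  have K3 := Li3_kummer (x := 1 / 3) (by norm_num) (by norm_num)
  have A2 := Li3_landen (x := 1 / 2) (by norm_num) (by norm_num)
  have A3 := Li3_landen (x := 2 / 3) (by norm_num) (by norm_num)
  have A4 := Li3_landen (x := 3 / 4) (by norm_num) (by norm_num)
  have D := polyLog_sq (k := 3) (by norm_num) (x := 1 / 2) (by norm_num [abs_of_pos])
  have N := polyLog_three_neg_one
  rw [show (1 - 1 / 2 : ℝ) / (1 + 1 / 2) = 1 / 3 by norm_num, show (1 - 1 / 2 : ℝ) = 1 / 2 by norm_num,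
    show (1 + 1 / 2 : ℝ)⁻¹ = 2 / 3 by norm_num, show (1 - (1 / 2) ^ 2 : ℝ) = 3 / 4 by norm_num,
    show (1 + 1 / 2 : ℝ) = 3 / 2 by norm_num, l32] at K2
  rw [show (1 - 1 / 3 : ℝ) / (1 + 1 / 3) = 1 / 2 by norm_num, show (1 - 1 / 3 : ℝ) = 2 / 3 by norm_num,
    show (1 + 1 / 3 : ℝ)⁻¹ = 3 / 4 by norm_num, show (1 - (1 / 3) ^ 2 : ℝ) = 8 / 9 by norm_num,
    show (1 + 1 / 3 : ℝ) = 4 / 3 by norm_num, l43] at K3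
  rw [show (1 - 1 / 2 : ℝ) = 1 / 2 by norm_num, show (1 - (1 / 2)⁻¹ : ℝ) = -1 by norm_num, l12] at A2
  rw [show (1 - 2 / 3 : ℝ) = 1 / 3 by norm_num, show (1 - (2 / 3)⁻¹ : ℝ) = -(1 / 2) by norm_num,
    l23, l13] at A3
  rw [show (1 - 3 / 4 : ℝ) = 1 / 4 by norm_num, show (1 - (3 / 4)⁻¹ : ℝ) = -(1 / 3) by norm_num,
    l34, l14] at A4
  rw [show ((1 / 2) ^ 2 : ℝ) = 1 / 4 by norm_num] at D
  rw [l32, l43]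
  -- The coefficients are forced: they eliminate every value of `Li₃` absent from the claim.
  linear_combination -2 * K3 - 2 / 3 * K2 - 2 / 3 * A4 + 2 / 3 * A3 + 1 / 3 * D + 5 / 3 * A2
    - 5 / 3 * N
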